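/- arXiv:2402.18719 — 2 statements merged into one kernel-verified Lean document; each statement's English description precedes it below -/
import Mathlib

section
/- Propagation along a time-respecting path: under the max-consensus-with-drops dynamics, suppose there are nodes v_0, v_1, …, v_p with (v_s, v_{s-1}) ∈ E for each s = 1,…,p, and time steps k ≤ k_1 < k_2 < ⋯ < k_p such that w_{k_s}(v_s, v_{s-1}) = true for each s. Then x_{k_p + 1}(v_p) ≥ x_k(v_0). -/
/-- A trajectory `x` is a supersolution of max-consensus over the time-varying links `link` if each
state is at least what the max-consensus update would produce from the previous one;
`link n j i` means that `j` successfully receives from `i` at step `n`. These inequalities are the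
half of the dynamics responsible for propagation, and they make sense for infinitely many nodes and
in any preorder, where the maximum need not exist. -/
structure IsMaxConsensusSupersolution {V α : Type*} [Preorder α]
    (link : ℕ → V → V → Prop) (x : ℕ → V → α) : Prop where
  le_succ : ∀ n j, x n j ≤ x (n + 1) j
  le_succ_of_link : ∀ {n j i}, link n j i → x n i ≤ x (n + 1) j

namespace IsMaxConsensusSupersolution

variable {V α : Type*} {link : ℕ → V → V → Prop} {x : ℕ → V → α}

theorem of_eq_sup' [SemilatticeSup α] [Fintype V] [DecidableEq V] [∀ n, DecidableRel (link n)]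
    (hx : ∀ n j, x (n + 1) j =
      (insert j (Finset.univ.filter fun i => link n j i)).sup' (Finset.insert_nonempty _ _)
        fun i => x n i) :
    IsMaxConsensusSupersolution link x where
  le_succ n j := by
    rw [hx]
    exact Finset.le_sup' (x n) (Finset.mem_insert_self _ _)
  le_succ_of_link {n j i} hji := by
    rw [hx]
    exact Finset.le_sup' (x n)
      (Finset.mem_insert_of_mem (Finset.mem_filter.mpr ⟨Finset.mem_univ i, hji⟩))

theorem monotone [Preorder α] (hx : IsMaxConsensusSupersolution link x) (j : V) :
    Monotone fun n => x n j :=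
  monotone_nat_of_le_succ fun n => hx.le_succ n j

end IsMaxConsensusSupersolution

theorem maxCUCL_time_respecting_path_propagation_general
    {V α : Type*} [Preorder α] {link : ℕ → V → V → Prop} {x : ℕ → V → α}
    (hx : IsMaxConsensusSupersolution link x)
    {p : ℕ} (hp : 1 ≤ p) {v : ℕ → V} {t : ℕ → ℕ} {k : ℕ}
    (hlink : ∀ s, 1 ≤ s → s ≤ p → link (t s) (v s) (v (s - 1)))
    (hk : k ≤ t 1)
    (ht : ∀ s, 1 ≤ s → s < p → t s < t (s + 1)) :
    x k (v 0) ≤ x (t p + 1) (v p) := by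
  induction p, hp using Nat.le_induction with
  | base =>
    calc x k (v 0)
      _ ≤ x (t 1) (v 0) := hx.monotone (v 0) hk
      _ ≤ x (t 1 + 1) (v 1) := hx.le_succ_of_link (hlink 1 le_rfl le_rfl)
  | succ p hp ih =>
    calc x k (v 0)
      _ ≤ x (t p + 1) (v p) :=
        ih (fun s hs hsp => hlink s hs (hsp.trans p.le_succ))
          fun s hs hsp => ht s hs (hsp.trans p.lt_succ_self)
      _ ≤ x (t (p + 1)) (v p) := hx.monotone (v p) (ht p hp p.lt_succ_self)
      _ ≤ x (t (p + 1) + 1) (v (p + 1)) :=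
        hx.le_succ_of_link (hlink (p + 1) p.succ_pos le_rfl)

/-- Propagation along a time-respecting path: under the
max-consensus-with-drops dynamics, suppose there are nodes `v 0, v 1, …, v p`
(with `p ≥ 1`) such that `(v s, v (s-1)) ∈ E` for each `s = 1, …, p`, and time
steps `k ≤ k₁ < k₂ < ⋯ < k_p` (given by `t : ℕ → ℕ`) such that the transmission
along `(v s, v (s-1))` at time `t s` is successful for each `s`.
Then `x (t p + 1) (v p) ≥ x k (v 0)`. -/
theorem maxCUCL_time_respecting_path_propagation
    {V : Type*} [Fintype V] [Nonempty V] [DecidableEq V]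
    (E : V → V → Prop) [DecidableRel E]
    (w : ℕ → V → V → Bool) (x : ℕ → V → ℝ)
    (hx : ∀ k j, x (k + 1) j =
      ((insert j (Finset.univ.filter fun i => E j i ∧ w k j i = true)).sup'
        (Finset.insert_nonempty _ _) fun i => x k i))
    (p : ℕ) (hp : 1 ≤ p) (v : ℕ → V) (t : ℕ → ℕ) (k : ℕ)
    (hE : ∀ s, 1 ≤ s → s ≤ p → E (v s) (v (s - 1)))
    (hk : k ≤ t 1)
    (ht : ∀ s, 1 ≤ s → s < p → t s < t (s + 1))
    (hw : ∀ s, 1 ≤ s → s ≤ p → w (t s) (v s) (v (s - 1)) = true) :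
    x k (v 0) ≤ x (t p + 1) (v p) :=
  maxCUCL_time_respecting_path_propagation_general
    (link := fun n j i => E j i ∧ w n j i = true) (.of_eq_sup' hx) hp
    (fun s hs hsp => ⟨hE s hs hsp, hw s hs hsp⟩) hk ht
end

section
/- Windowed convergence (key step in the proof of Proposition 1): suppose D ∈ ℕ is such that for every ordered pair of nodes (i,j) there is a directed path in E from i to j of length at most D, and suppose 0 = t_0 < t_1 < ⋯ < t_D are time steps such that for each s = 0,…,D−1 and each edge (j,i) ∈ E there exists some k with t_s ≤ k < t_{s+1} and w_k(j,i) = true. Then x_{t_D}(j) = q_m for every node j, where q_m = max_{i∈V} x_0(i). -/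
/-!
A value sitting at `i` crosses one edge of a directed path during each window, so it travels a path
of length `p ≤ D` from `i` to `j` during the *last* `p` windows, arriving at time exactly `t D`;
before that it merely waits at `i`. Hence `x (t D) j` dominates every initial value. Since every
upper bound of the initial values persists, it is their least upper bound.
-/

section MaxConsensus

variable {V α : Type*} [Preorder α]

/-- The max-consensus dynamics on a network with time-varying links, where `A k j i` says that `j`
hears `i` at step `k`. The maximum is encoded as a least upper bound, so that neither the node set
has to be finite nor the values linearly ordered. -/
def IsMaxConsensus (A : ℕ → V → V → Prop) (x : ℕ → V → α) : Prop :=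
  ∀ k j, IsLUB (x k '' insert j {i | A k j i}) (x (k + 1) j)

namespace IsMaxConsensus

variable {A : ℕ → V → V → Prop} {x : ℕ → V → α}

theorem monotone (hx : IsMaxConsensus A x) : Monotone x :=
  monotone_nat_of_le_succ fun k j =>
    (hx k j).1 (Set.mem_image_of_mem (x k) (Set.mem_insert j _))

theorem le_succ_of_link (hx : IsMaxConsensus A x) {k : ℕ} {j i : V} (hA : A k j i) :
    x k i ≤ x (k + 1) j :=
  (hx k j).1 (Set.mem_image_of_mem (x k) (Set.mem_insert_of_mem j hA))

theorem le_of_initial_le (hx : IsMaxConsensus A x) {b : α} (hb : ∀ i, x 0 i ≤ b) (k : ℕ) (j : V) :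
    x k j ≤ b := by
  induction k generalizing j with
  | zero => exact hb j
  | succ k ih => exact (hx k j).2 (Set.forall_mem_image.2 fun i _ => ih i)

theorem le_of_link_mem_window (hx : IsMaxConsensus A x) {a b : ℕ} {j i : V}
    (hlink : ∃ k, a ≤ k ∧ k < b ∧ A k j i) : x a i ≤ x b j := by
  obtain ⟨k, hak, hkb, hA⟩ := hlink
  calc x a i ≤ x k i := hx.monotone hak i
    _ ≤ x (k + 1) j := hx.le_succ_of_link hA
    _ ≤ x b j := hx.monotone hkb j

theorem le_along_path (hx : IsMaxConsensus A x) {t : ℕ → ℕ} {v : ℕ → V} {p : ℕ}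
    (hlink : ∀ s < p, ∃ k, t s ≤ k ∧ k < t (s + 1) ∧ A k (v (s + 1)) (v s)) :
    x (t 0) (v 0) ≤ x (t p) (v p) := by
  induction p with
  | zero => exact le_rfl
  | succ p ih =>
    calc x (t 0) (v 0) ≤ x (t p) (v p) := ih fun s hs => hlink s (hs.trans p.lt_succ_self)
      _ ≤ x (t (p + 1)) (v (p + 1)) := hx.le_of_link_mem_window (hlink p p.lt_succ_self)

end IsMaxConsensus

end MaxConsensus

theorem isLUB_image_finset_sup' {ι α : Type*} [SemilatticeSup α] {s : Finset ι} (hs : s.Nonempty)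
    (f : ι → α) : IsLUB (f '' s) (s.sup' hs f) :=
  ⟨Set.forall_mem_image.2 fun _ => Finset.le_sup' f,
    fun _ hb => Finset.sup'_le hs f (Set.forall_mem_image.1 hb)⟩

theorem isMaxConsensus_of_eq_sup' {V α : Type*} [Fintype V] [DecidableEq V] [SemilatticeSup α]
    {A : ℕ → V → V → Prop} [∀ k j, DecidablePred (A k j)] {x : ℕ → V → α}
    (hx : ∀ k j, x (k + 1) j =
      (insert j (Finset.univ.filter fun i => A k j i)).sup' (Finset.insert_nonempty _ _)
        fun i => x k i) :
    IsMaxConsensus A x := by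
  intro k j
  rw [hx k j]
  simpa only [Finset.coe_insert, Finset.coe_filter_univ] using
    isLUB_image_finset_sup' (Finset.insert_nonempty j (Finset.univ.filter (A k j))) (x k)

theorem maxCUCL_windowed_convergence_general {V α : Type*} [Preorder α]
    {E : V → V → Prop} {w : ℕ → V → V → Bool} {x : ℕ → V → α}
    (hx : IsMaxConsensus (fun k j i => E j i ∧ w k j i = true) x) {D : ℕ}
    (hD : ∀ i j : V, ∃ p ≤ D, ∃ v : ℕ → V, v 0 = i ∧ v p = j ∧
      ∀ s, 1 ≤ s → s ≤ p → E (v s) (v (s - 1)))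
    {t : ℕ → ℕ}
    (hsucc : ∀ s, s < D → ∀ j i, E j i →
      ∃ k, t s ≤ k ∧ k < t (s + 1) ∧ w k j i = true) (j : V) :
    IsLUB (Set.range (x 0)) (x (t D) j) := by
  refine ⟨Set.forall_mem_range.2 fun i => ?_, fun b hb =>
    hx.le_of_initial_le (Set.forall_mem_range.1 hb) (t D) j⟩
  obtain ⟨p, hpD, v, rfl, rfl, hpath⟩ := hD i j
  have hlink (s : ℕ) (hs : s < p) : ∃ k, t (D - p + s) ≤ k ∧ k < t (D - p + (s + 1)) ∧
      E (v (s + 1)) (v s) ∧ w k (v (s + 1)) (v s) = true := by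
    have hE : E (v (s + 1)) (v s) := hpath (s + 1) (Nat.le_add_left 1 s) hs
    obtain ⟨k, hk, hk', hw⟩ := hsucc (D - p + s) (by omega) _ _ hE
    exact ⟨k, hk, hk', hE, hw⟩
  calc x 0 (v 0) ≤ x (t (D - p)) (v 0) := hx.monotone (Nat.zero_le _) (v 0)
    _ ≤ x (t (D - p + p)) (v p) := hx.le_along_path (t := fun s => t (D - p + s)) hlink
    _ = x (t D) (v p) := by rw [Nat.sub_add_cancel hpD]

/-- Windowed convergence: suppose `D` is such that every
ordered pair of nodes is joined by a directed path in `E` of length at most `D`,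
and `0 = t 0 < t 1 < ⋯ < t D` are time steps such that during each window
`[t s, t (s+1))` every edge has at least one successful transmission.
Then `x (t D) j = q_m` for every node `j`, where `q_m = max_{i ∈ V} x 0 i`. -/
theorem maxCUCL_windowed_convergence
    {V : Type*} [Fintype V] [Nonempty V] [DecidableEq V]
    (E : V → V → Prop) [DecidableRel E]
    (w : ℕ → V → V → Bool) (x : ℕ → V → ℝ)
    (hx : ∀ k j, x (k + 1) j =
      ((insert j (Finset.univ.filter fun i => E j i ∧ w k j i = true)).sup'
        (Finset.insert_nonempty _ _) fun i => x k i))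
    (D : ℕ)
    (hD : ∀ i j : V, ∃ p ≤ D, ∃ v : ℕ → V, v 0 = i ∧ v p = j ∧
      ∀ s, 1 ≤ s → s ≤ p → E (v s) (v (s - 1)))
    (t : ℕ → ℕ) (ht0 : t 0 = 0)
    (htmono : ∀ s, s < D → t s < t (s + 1))
    (hsucc : ∀ s, s < D → ∀ j i, E j i →
      ∃ k, t s ≤ k ∧ k < t (s + 1) ∧ w k j i = true) :
    ∀ j, x (t D) j = Finset.univ.sup' Finset.univ_nonempty (x 0) :=
  fun j => (maxCUCL_windowed_convergence_general (isMaxConsensus_of_eq_sup' hx) hD hsucc j).unique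
    (by simpa using isLUB_image_finset_sup' Finset.univ_nonempty (x 0))
end
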